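/- Let q₀ be drawn uniformly at random from the unit sphere in ℝⁿ, and let ε > 0 satisfy ε ≥ n^{−1}·e^{−2n}. Then the probability that (e₁ᵀq₀)² < ε is at most 3·√(nε), where e₁ denotes the first standard basis vector. -/

import Mathlib

open MeasureTheory

/-!
The ratio `⟪u, v⟫² / (‖u‖ ‖v‖)²` is symmetric in `u` and `v`, and its distribution under a
rotation-invariant law of `v` does not depend on `u ≠ 0`. Averaging over `u` as well, Fubini shows
that it is the same for every rotation-invariant law without an atom at `0`, so the uniform
distribution on the sphere may be replaced by the standard Gaussian. There `⟪u, v⟫` has density at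
most `1` and is independent of the component `w` of `v` orthogonal to `u`; since
`⟪u, v⟫² < ε ‖v‖²` means `|⟪u, v⟫| < c ‖w‖` with `c = √(ε / (1 - ε))`, its probability conditionally
on `w` is at most `2 c ‖w‖`, and `E ‖w‖ ≤ √n`. For `ε ≤ 1 / 9` one has `2 c ≤ 3 √ε`, while for
`ε ≥ 1 / 9` the bound `3 √(n ε)` is at least `1`.
-/

open ProbabilityTheory Module
open scoped ENNReal NNReal RealInnerProductSpace

section SmallBall

lemma gaussianPDFReal_le (m : ℝ) (v : ℝ≥0) (x : ℝ) :
    gaussianPDFReal m v x ≤ (√(2 * Real.pi * v))⁻¹ := by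
  refine mul_le_of_le_one_right (by positivity) (Real.exp_le_one_iff.2 ?_)
  exact div_nonpos_of_nonpos_of_nonneg (neg_nonpos.2 (sq_nonneg _)) (by positivity)

lemma gaussianReal_le_smul_volume (m : ℝ) {v : ℝ≥0} (hv : v ≠ 0) :
    gaussianReal m v ≤ ENNReal.ofReal (√(2 * Real.pi * v))⁻¹ • volume := by
  rw [gaussianReal_of_var_ne_zero m hv, ← withDensity_const]
  exact withDensity_mono (.of_forall fun x ↦ ENNReal.ofReal_le_ofReal (gaussianPDFReal_le m v x))

lemma gaussianReal_one_le_volume (m : ℝ) : gaussianReal m 1 ≤ volume := by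
  refine (gaussianReal_le_smul_volume m one_ne_zero).trans fun s ↦ mul_le_of_le_one_left' ?_
  rw [ENNReal.ofReal_le_one]
  apply inv_le_one_of_one_le₀
  rw [Real.one_le_sqrt, NNReal.coe_one]
  linarith [Real.pi_gt_three]

variable {Ω : Type*} {mΩ : MeasurableSpace Ω} {P : Measure Ω} [IsFiniteMeasure P]

lemma measure_abs_lt_le_lintegral_of_indepFun {X Y : Ω → ℝ} (hX : AEMeasurable X P)
    (hY : AEMeasurable Y P) (hXY : X ⟂ᵢ[P] Y) (hlaw : P.map X ≤ volume) :
    P {ω | |X ω| < Y ω} ≤ ∫⁻ ω, ENNReal.ofReal (2 * Y ω) ∂P := by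
  have hmeas : MeasurableSet {p : ℝ × ℝ | |p.1| < p.2} :=
    measurableSet_lt (by fun_prop) (by fun_prop)
  have hslice (y : ℝ) : volume {x : ℝ | |x| < y} = ENNReal.ofReal (2 * y) := by
    simp_rw [abs_lt]
    exact Real.volume_Ioo.trans (by ring_nf)
  calc P {ω | |X ω| < Y ω}
    _ = ((P.map X).prod (P.map Y)) {p | |p.1| < p.2} := by
      rw [← hXY.map_prod_eq_prod_map_map hX hY,
        Measure.map_apply_of_aemeasurable (by fun_prop) hmeas]
      rfl
    _ = ∫⁻ y, P.map X {x | |x| < y} ∂P.map Y := Measure.prod_apply_symm hmeas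
    _ ≤ ∫⁻ y, ENNReal.ofReal (2 * y) ∂P.map Y :=
      lintegral_mono fun y ↦ (hlaw _).trans (hslice y).le
    _ = ∫⁻ ω, ENNReal.ofReal (2 * Y ω) ∂P := lintegral_map' (by fun_prop) hY

end SmallBall

section StdGaussian

variable {E : Type*} [NormedAddCommGroup E] [InnerProductSpace ℝ E] [FiniteDimensional ℝ E]
  [MeasurableSpace E] [BorelSpace E]

lemma variance_inner_stdGaussian (u : E) : Var[fun x ↦ ⟪u, x⟫; stdGaussian E] = ‖u‖ ^ 2 := by
  simpa using! variance_dual_stdGaussian (innerSL ℝ u)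

lemma integral_inner_stdGaussian (u : E) : ∫ x, ⟪u, x⟫ ∂stdGaussian E = 0 :=
  integral_strongDual_stdGaussian (innerSL ℝ u)

lemma integral_inner_sq_stdGaussian (u : E) : ∫ x, ⟪u, x⟫ ^ 2 ∂stdGaussian E = ‖u‖ ^ 2 := by
  rw [← variance_inner_stdGaussian,
    variance_of_integral_eq_zero (by fun_prop) (integral_inner_stdGaussian u)]

lemma map_inner_stdGaussian (u : E) :
    (stdGaussian E).map (fun x ↦ ⟪u, x⟫) = gaussianReal 0 (‖u‖₊ ^ 2) := by
  have hlaw : HasGaussianLaw (fun x ↦ ⟪u, x⟫) (stdGaussian E) :=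
    IsGaussian.hasGaussianLaw_id.map (innerSL ℝ u)
  rw [hlaw.map_eq_gaussianReal, integral_inner_stdGaussian, variance_inner_stdGaussian]
  congr 1
  ext
  simp

lemma integral_norm_sq_stdGaussian : ∫ x, ‖x‖ ^ 2 ∂stdGaussian E = finrank ℝ E := by
  have hint (u : E) : Integrable (fun x ↦ ⟪u, x⟫ ^ 2) (stdGaussian E) :=
    (IsGaussian.memLp_two_id.const_inner u).integrable_sq
  simp_rw [← (stdOrthonormalBasis ℝ E).sum_sq_inner_right]
  rw [integral_finsetSum _ fun i _ ↦ hint _]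
  simp [integral_inner_sq_stdGaussian]

lemma integral_norm_stdGaussian_le : ∫ x, ‖x‖ ∂stdGaussian E ≤ √(finrank ℝ E) := by
  apply Real.le_sqrt_of_sq_le
  have hmem : MemLp (fun x : E ↦ ‖x‖) 2 (stdGaussian E) := IsGaussian.memLp_two_id.norm
  have hvar := variance_nonneg (fun x : E ↦ ‖x‖) (stdGaussian E)
  rw [variance_eq_sub hmem, sub_nonneg] at hvar
  exact hvar.trans_eq integral_norm_sq_stdGaussian

lemma ae_ne_zero_stdGaussian [Nontrivial E] : ∀ᵐ x ∂stdGaussian E, x ≠ 0 := by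
  obtain ⟨u, hu⟩ := exists_ne (0 : E)
  have : NullSingletonClass (gaussianReal 0 (‖u‖₊ ^ 2)) :=
    nullSingletonClass_gaussianReal (by simpa using hu)
  have hinner : ∀ᵐ t ∂(stdGaussian E).map (fun x ↦ ⟪u, x⟫), t ≠ 0 := by
    rw [map_inner_stdGaussian]
    exact Measure.ae_ne _ 0
  filter_upwards [ae_of_ae_map (by fun_prop) hinner] with x hx h0
  simp [h0] at hx

lemma indepFun_stdGaussian_of_comp_adjoint_eq_zero {F G : Type*}
    [NormedAddCommGroup F] [InnerProductSpace ℝ F] [CompleteSpace F] [MeasurableSpace F]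
    [BorelSpace F] [SecondCountableTopology F]
    [NormedAddCommGroup G] [InnerProductSpace ℝ G] [CompleteSpace G] [MeasurableSpace G]
    [BorelSpace G] [SecondCountableTopology G]
    {A : E →L[ℝ] F} {B : E →L[ℝ] G} (hAB : A ∘L B.adjoint = 0) : A ⟂ᵢ[stdGaussian E] B := by
  have hlaw : HasGaussianLaw (fun x ↦ (A x, B x)) (stdGaussian E) :=
    IsGaussian.hasGaussianLaw_id.map (A.prod B)
  refine hlaw.indepFun_of_covariance_inner fun y z ↦ ?_
  simp_rw [← ContinuousLinearMap.adjoint_inner_left]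
  rw [← covarianceBilin_apply_eq_cov IsGaussian.memLp_two_id, covarianceBilin_stdGaussian,
    innerSL_apply_apply, ContinuousLinearMap.adjoint_inner_left, ← ContinuousLinearMap.comp_apply,
    hAB]
  simp

lemma indepFun_inner_starProjection_orthogonal_stdGaussian (u : E) :
    (fun x ↦ ⟪u, x⟫) ⟂ᵢ[stdGaussian E] (ℝ ∙ u)ᗮ.starProjection := by
  refine indepFun_stdGaussian_of_comp_adjoint_eq_zero (A := innerSL ℝ u) ?_
  ext x
  have horth : (ℝ ∙ u)ᗮ.starProjection x ∈ (ℝ ∙ u)ᗮ := Submodule.starProjection_apply_mem _ x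
  simpa [(isSelfAdjoint_starProjection _).adjoint_eq] using
    Submodule.mem_orthogonal_singleton_iff_inner_right.1 horth

end StdGaussian

/-- The set of vectors `v` with `cos² ∠(u, v) < ε`: the open cone around the hyperplane `uᗮ`, which
cuts out on the unit sphere a band around the equator. The inequality is multiplied out, so that
the cone is empty when `u = 0` and never contains `0`. -/
def equatorialCone {E : Type*} [NormedAddCommGroup E] [InnerProductSpace ℝ E] (ε : ℝ) (u : E) :
    Set E :=
  {v | ⟪u, v⟫ ^ 2 < ε * ‖u‖ ^ 2 * ‖v‖ ^ 2}

/-- Invariance of a measure under the full orthogonal group, reflections included. -/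
def IsRotationInvariant {E : Type*} [NormedAddCommGroup E] [InnerProductSpace ℝ E]
    [MeasurableSpace E] (μ : Measure E) : Prop :=
  ∀ T : E ≃ₗᵢ[ℝ] E, μ.map T = μ

namespace equatorialCone

variable {E : Type*} [NormedAddCommGroup E] [InnerProductSpace ℝ E] {ε : ℝ} {u v w : E}

lemma mem_comm : v ∈ equatorialCone ε u ↔ u ∈ equatorialCone ε v := by
  simp only [equatorialCone, Set.mem_ofPred_eq, real_inner_comm, mul_right_comm]

lemma mem_of_norm_eq_one (hu : ‖u‖ = 1) :
    v ∈ equatorialCone ε u ↔ ⟪u, v⟫ ^ 2 < ε * ‖v‖ ^ 2 := by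
  simp [equatorialCone, hu]

lemma smul_eq {c : ℝ} (hc : c ≠ 0) (u : E) : equatorialCone ε (c • u) = equatorialCone ε u := by
  ext v
  have hc2 : 0 < c ^ 2 := by positivity
  simp only [equatorialCone, Set.mem_ofPred_eq, real_inner_smul_left, norm_smul, mul_pow,
    Real.norm_eq_abs, sq_abs]
  rw [mul_left_comm, mul_assoc, mul_lt_mul_iff_right₀ hc2]

lemma preimage_linearIsometryEquiv {F : Type*} [NormedAddCommGroup F] [InnerProductSpace ℝ F]
    (T : E ≃ₗᵢ[ℝ] F) (u : E) :
    T ⁻¹' equatorialCone ε (T u) = equatorialCone ε u := by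
  ext v
  simp [equatorialCone]

lemma mem_iff_abs_inner_lt (hu : ‖u‖ = 1) (hε0 : 0 ≤ ε) (hε1 : ε < 1) :
    v ∈ equatorialCone ε u ↔ |⟪u, v⟫| < √(ε / (1 - ε)) * ‖(ℝ ∙ u)ᗮ.starProjection v‖ := by
  set w := (ℝ ∙ u)ᗮ.starProjection v
  have hpyth : ‖v‖ ^ 2 = ⟪u, v⟫ ^ 2 + ‖w‖ ^ 2 := by
    rw [Submodule.norm_sq_eq_add_norm_sq_starProjection v (ℝ ∙ u),
      Submodule.starProjection_unit_singleton ℝ hu, norm_smul, hu, mul_one, Real.norm_eq_abs,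
      sq_abs]
  have h1ε : 0 < 1 - ε := sub_pos.2 hε1
  calc v ∈ equatorialCone ε u
    _ ↔ ⟪u, v⟫ ^ 2 < ε * (⟪u, v⟫ ^ 2 + ‖w‖ ^ 2) := by rw [mem_of_norm_eq_one hu, hpyth]
    _ ↔ ⟪u, v⟫ ^ 2 * (1 - ε) < ε * ‖w‖ ^ 2 := by constructor <;> intro h <;> linarith
    _ ↔ ⟪u, v⟫ ^ 2 < (√(ε / (1 - ε)) * ‖w‖) ^ 2 := by
      rw [mul_pow, Real.sq_sqrt (by positivity), div_mul_eq_mul_div, lt_div_iff₀ h1ε]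
    _ ↔ |⟪u, v⟫| < √(ε / (1 - ε)) * ‖w‖ := by
      rw [sq_lt_sq, abs_of_nonneg (a := √(ε / (1 - ε)) * ‖w‖) (by positivity)]

variable [MeasurableSpace E] [BorelSpace E]

lemma measurableSet (ε : ℝ) (u : E) : MeasurableSet (equatorialCone ε u) :=
  (isOpen_lt (by fun_prop) (by fun_prop)).measurableSet

lemma measurableSet_prod [SecondCountableTopology E] (ε : ℝ) :
    MeasurableSet {p : E × E | p.2 ∈ equatorialCone ε p.1} := by
  simp only [equatorialCone, Set.mem_ofPred_eq]
  exact measurableSet_lt (by fun_prop) (by fun_prop)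

lemma measure_eq_of_norm_eq {μ : Measure E} (hμ : IsRotationInvariant μ) (h : ‖u‖ = ‖w‖) :
    μ (equatorialCone ε u) = μ (equatorialCone ε w) := by
  set T := (ℝ ∙ (u - w))ᗮ.reflection
  have hT : T u = w := Submodule.reflection_sub h
  rw [← preimage_linearIsometryEquiv T u, hT,
    ← Measure.map_apply T.continuous.measurable (measurableSet ε w), hμ T]

lemma measure_eq_of_ne_zero {μ : Measure E} (hμ : IsRotationInvariant μ) (hu : u ≠ 0) (hw : w ≠ 0) :
    μ (equatorialCone ε u) = μ (equatorialCone ε w) := by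
  rw [← smul_eq (inv_ne_zero (norm_ne_zero_iff.2 hu)) u,
    ← smul_eq (inv_ne_zero (norm_ne_zero_iff.2 hw)) w]
  apply measure_eq_of_norm_eq hμ
  simp [norm_smul, hu, hw]

theorem measure_eq_of_isRotationInvariant [SecondCountableTopology E] {μ ν : Measure E}
    [IsProbabilityMeasure μ] [IsProbabilityMeasure ν] (hμ : IsRotationInvariant μ)
    (hν : IsRotationInvariant ν) (hμ0 : ∀ᵐ v ∂μ, v ≠ 0) (hν0 : ∀ᵐ v ∂ν, v ≠ 0) (hu : u ≠ 0) :
    μ (equatorialCone ε u) = ν (equatorialCone ε u) := by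
  have hmeas := measurableSet_prod (E := E) ε
  calc μ (equatorialCone ε u)
    _ = ∫⁻ w, μ (equatorialCone ε w) ∂ν := by
      rw [lintegral_congr_ae (hν0.mono fun w hw ↦ measure_eq_of_ne_zero hμ hw hu), lintegral_const,
        measure_univ, mul_one]
    _ = (ν.prod μ) {p | p.2 ∈ equatorialCone ε p.1} := (Measure.prod_apply hmeas).symm
    _ = ∫⁻ v, ν {w | v ∈ equatorialCone ε w} ∂μ := Measure.prod_apply_symm hmeas
    _ = ∫⁻ v, ν (equatorialCone ε v) ∂μ := by simp_rw [mem_comm (ε := ε), Set.ofPred_mem_eq]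
    _ = ν (equatorialCone ε u) := by
      rw [lintegral_congr_ae (hμ0.mono fun v hv ↦ measure_eq_of_ne_zero hν hv hu), lintegral_const,
        measure_univ, mul_one]

variable [FiniteDimensional ℝ E]

theorem stdGaussian_le_of_lt_one (hu : ‖u‖ = 1) (hε0 : 0 ≤ ε) (hε1 : ε < 1) :
    stdGaussian E (equatorialCone ε u) ≤
      ENNReal.ofReal (2 * √(finrank ℝ E * (ε / (1 - ε)))) := by
  set p := (ℝ ∙ u)ᗮ.starProjection
  set c := √(ε / (1 - ε))
  have hindep : (fun v ↦ ⟪u, v⟫) ⟂ᵢ[stdGaussian E] fun v ↦ c * ‖p v‖ :=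
    (indepFun_inner_starProjection_orthogonal_stdGaussian u).comp measurable_id
      (ψ := fun w ↦ c * ‖w‖) (by fun_prop)
  have hlaw : (stdGaussian E).map (fun v ↦ ⟪u, v⟫) ≤ volume := by
    have hu' : ‖u‖₊ = 1 := NNReal.eq hu
    simpa [map_inner_stdGaussian, hu'] using gaussianReal_one_le_volume 0
  have hint : Integrable (fun v : E ↦ 2 * (c * ‖v‖)) (stdGaussian E) :=
    (IsGaussian.integrable_id.norm.const_mul c).const_mul 2
  calc stdGaussian E (equatorialCone ε u)
    _ = stdGaussian E {v | |⟪u, v⟫| < c * ‖p v‖} :=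
      congrArg _ (Set.ext fun v ↦ mem_iff_abs_inner_lt hu hε0 hε1)
    _ ≤ ∫⁻ v, ENNReal.ofReal (2 * (c * ‖p v‖)) ∂stdGaussian E :=
      measure_abs_lt_le_lintegral_of_indepFun (by fun_prop) (by fun_prop) hindep hlaw
    _ ≤ ∫⁻ v, ENNReal.ofReal (2 * (c * ‖v‖)) ∂stdGaussian E := by
      gcongr with v
      exact Submodule.norm_starProjection_apply_le _ v
    _ = ENNReal.ofReal (2 * (c * ∫ v, ‖v‖ ∂stdGaussian E)) := by
      rw [← ofReal_integral_eq_lintegral_ofReal hint (.of_forall fun v ↦ by positivity),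
        integral_const_mul, integral_const_mul]
    _ ≤ ENNReal.ofReal (2 * (c * √(finrank ℝ E))) := by
      gcongr
      exact integral_norm_stdGaussian_le
    _ = ENNReal.ofReal (2 * √(finrank ℝ E * (ε / (1 - ε)))) := by
      rw [Real.sqrt_mul (Nat.cast_nonneg _), mul_comm c]

theorem stdGaussian_le (hu : ‖u‖ = 1) (hε0 : 0 ≤ ε) :
    stdGaussian E (equatorialCone ε u) ≤ ENNReal.ofReal (3 * √(finrank ℝ E * ε)) := by
  rcases le_total ε (1 / 9) with hε | hε
  · have hratio : ε / (1 - ε) ≤ (3 / 2) ^ 2 * ε := by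
      rw [div_le_iff₀ (by linarith)]
      nlinarith
    refine (stdGaussian_le_of_lt_one hu hε0 (by linarith)).trans (ENNReal.ofReal_le_ofReal ?_)
    calc 2 * √(finrank ℝ E * (ε / (1 - ε)))
      _ ≤ 2 * √(finrank ℝ E * ((3 / 2) ^ 2 * ε)) := by gcongr
      _ = 3 * √(finrank ℝ E * ε) := by
        rw [mul_left_comm, Real.sqrt_mul (by positivity), Real.sqrt_sq (by norm_num)]
        ring
  · have : Nontrivial E := nontrivial_of_ne u 0 (norm_ne_zero_iff.1 (by simp [hu]))
    have hdim : (1 : ℝ) ≤ finrank ℝ E := mod_cast finrank_pos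
    have hsqrt : 1 / 3 ≤ √(finrank ℝ E * ε) := Real.le_sqrt_of_sq_le (by nlinarith)
    exact prob_le_one.trans (ENNReal.one_le_ofReal.2 (by linarith))

end equatorialCone

theorem sphere_first_coordinate_small_probability_general {E : Type*} [NormedAddCommGroup E]
    [InnerProductSpace ℝ E] [FiniteDimensional ℝ E] [MeasurableSpace E] [BorelSpace E]
    {μ : Measure E} [IsProbabilityMeasure μ] (hsupp : μ {v | ‖v‖ = 1} = 1)
    (hrot : IsRotationInvariant μ) {u : E} (hu : ‖u‖ = 1) {ε : ℝ} (hε : 0 ≤ ε) :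
    μ {v | ⟪u, v⟫ ^ 2 < ε} ≤ ENNReal.ofReal (3 * √(finrank ℝ E * ε)) := by
  have hu0 : u ≠ 0 := norm_ne_zero_iff.1 (by simp [hu])
  have : Nontrivial E := nontrivial_of_ne u 0 hu0
  have hnorm : ∀ᵐ v ∂μ, ‖v‖ = 1 :=
    (mem_ae_iff_prob_eq_one (measurableSet_eq_fun (by fun_prop) (by fun_prop))).2 hsupp
  have hne : ∀ᵐ v ∂μ, v ≠ 0 := hnorm.mono fun v hv ↦ norm_ne_zero_iff.1 (by simp [hv])
  calc μ {v | ⟪u, v⟫ ^ 2 < ε}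
    _ ≤ μ (equatorialCone ε u) := measure_mono_ae <| hnorm.mono fun v hv (hlt : _ < ε) ↦
      (equatorialCone.mem_of_norm_eq_one hu).2 (by simpa [hv] using hlt)
    _ = stdGaussian E (equatorialCone ε u) :=
      equatorialCone.measure_eq_of_isRotationInvariant hrot (fun T ↦ stdGaussian_map T) hne
        ae_ne_zero_stdGaussian hu0
    _ ≤ ENNReal.ofReal (3 * √(finrank ℝ E * ε)) := equatorialCone.stdGaussian_le hu hε

/-- If `q₀` is drawn uniformly from the unit sphere in `ℝⁿ` (i.e.\ from
the rotation-invariant probability measure supported on the sphere) and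
`ε ≥ n⁻¹·e^{−2n}`, then `Pr((e₁ᵀq₀)² < ε) ≤ 3·√(nε)`. -/
theorem sphere_first_coordinate_small_probability
    (n : ℕ) (hn : 0 < n)
    (μ : Measure (EuclideanSpace ℝ (Fin n))) [IsProbabilityMeasure μ]
    (hsupp : μ {v | ‖v‖ = 1} = 1)
    (hrot : ∀ T : EuclideanSpace ℝ (Fin n) ≃ₗᵢ[ℝ] EuclideanSpace ℝ (Fin n),
      μ.map T = μ)
    (ε : ℝ) (hε : (n : ℝ)⁻¹ * Real.exp (-2 * n) ≤ ε) :
    μ {v | v ⟨0, hn⟩ ^ 2 < ε} ≤ ENNReal.ofReal (3 * Real.sqrt (n * ε)) := by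
  have hε0 : 0 ≤ ε := le_trans (by positivity) hε
  simpa [EuclideanSpace.inner_single_left] using
    sphere_first_coordinate_small_probability_general hsupp hrot
      (u := EuclideanSpace.single ⟨0, hn⟩ 1) (by simp) hε0
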